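/- arXiv:1207.4642 — 3 statements merged into one kernel-verified Lean document; each statement's English description precedes it below -/
import Mathlib

section
/- Let g ∈ PC[0,1] be non-constant with minimal jump height h_min, maximal jump height h_max and minimal interval of constancy length l_min, and let K be a symmetric, nonnegative, normalized convolution kernel with supp K ⊆ [−κ,κ] that is strictly positive on a neighborhood of 0. If κ ≤ h_min·l_min / (2·(8·h_max + h_min)), then for every Potts parameter γ with 2·κ·h_max ≤ γ ≤ (1/2)·h_min·l_min − (h_min + 6·h_max)·κ, the function g is the unique minimizer over PC[0,1] of the L¹-Potts functional P_γ(u) = γ·J(u) + ‖u − K*g‖_{L¹[0,1]}; in particular P_γ(g) = inf_{u ∈ PC[0,1]} P_γ(u). -/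
open MeasureTheory Filter Set
open scoped ENNReal Classical

noncomputable section

/-- The Lebesgue measure restricted to `[0,1]`. -/
def mu01 : Measure ℝ := volume.restrict (Set.Icc (0:ℝ) 1)

/-- The step function determined by partition points `x` and values `a`. -/
def stepF {m : ℕ} (x : Fin (m + 1) → ℝ) (a : Fin m → ℝ) : ℝ → ℝ := fun t =>
  ∑ l : Fin m, Set.indicator (Set.Ioo (x l.castSucc) (x l.succ)) (fun _ => a l) t

/-- `u` is a.e. on `[0,1]` represented by the step function with partition `x` and values `a`. -/
def IsPCRep (u : ℝ → ℝ) {m : ℕ} (x : Fin (m + 1) → ℝ) (a : Fin m → ℝ) : Prop :=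
  StrictMono x ∧ x 0 = 0 ∧ x (Fin.last m) = 1 ∧ ∀ᵐ t ∂mu01, u t = stepF x a t

/-- `u` is piecewise constant on `[0,1]` (up to a.e. equality). -/
def IsPC (u : ℝ → ℝ) : Prop :=
  ∃ (m : ℕ) (x : Fin (m + 1) → ℝ) (a : Fin m → ℝ), IsPCRep u x a

/-- The number of jumps `J(u)`: the minimal number of interior partition points over all
piecewise constant representations of `u`. -/
def jumps (u : ℝ → ℝ) : ℕ :=
  sInf {jj : ℕ | ∃ (x : Fin (jj + 2) → ℝ) (a : Fin (jj + 1) → ℝ), IsPCRep u x a}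

/-- `u` is piecewise constant with all jump locations inside `S`. -/
def IsPCIn (u : ℝ → ℝ) (S : Set ℝ) : Prop :=
  ∃ (m : ℕ) (x : Fin (m + 1) → ℝ) (a : Fin m → ℝ), IsPCRep u x a ∧
    ∀ i : Fin (m + 1), i ≠ 0 → i ≠ Fin.last m → x i ∈ S

/-- The `L¹[0,1]` distance of two functions. -/
def L1dist (u v : ℝ → ℝ) : ℝ := ∫ t, |u t - v t| ∂mu01

/-- The continuous `L¹`-Potts functional `P_γ` with data `f`. -/
def Potts (γ : ℝ) (f u : ℝ → ℝ) : ℝ≥0∞ :=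
  if IsPC u then ENNReal.ofReal (γ * (jumps u : ℝ) + L1dist u f) else ⊤

/-- The (semi-)discrete `L¹`-Potts functional with data `f`, restricted to piecewise
constant functions whose jumps lie in `S`. -/
def PottsIn (γ : ℝ) (f : ℝ → ℝ) (S : Set ℝ) (u : ℝ → ℝ) : ℝ≥0∞ :=
  if IsPCIn u S then ENNReal.ofReal (γ * (jumps u : ℝ) + L1dist u f) else ⊤

/-- Convolution `(K*g)(t) = ∫ K(s)·g(t−s) ds`. -/
def convK (K g : ℝ → ℝ) : ℝ → ℝ := fun t => ∫ s, K s * g (t - s)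

/-- The piecewise constant function on `ℝ` with jump locations `j` and values `α`
(extended constantly outside the jump region): at `t`, its value is `α i` where `i`
is the number of jump locations strictly below `t`. -/
def stepOn {n : ℕ} (j : Fin n → ℝ) (α : Fin (n + 1) → ℝ) : ℝ → ℝ := fun t =>
  α ⟨(Finset.univ.filter fun i => j i < t).card,
      Nat.lt_succ_of_le ((Finset.card_filter_le _ _).trans (by simp))⟩

/-- The jump locations together with the endpoints `0` and `1`. -/
def jext {n : ℕ} (j : Fin (n + 1) → ℝ) : Fin (n + 3) → ℝ :=
  Fin.cons (0 : ℝ) (Fin.snoc j (1 : ℝ))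

/-- The minimal length `l_min` of the intervals of constancy (inside `[0,1]`). -/
def lmin {n : ℕ} (j : Fin (n + 1) → ℝ) : ℝ :=
  Finset.univ.inf' Finset.univ_nonempty
    fun i : Fin (n + 2) => jext j i.succ - jext j i.castSucc

/-- The minimal jump height `h_min`. -/
def hjumpMin {n : ℕ} (α : Fin (n + 2) → ℝ) : ℝ :=
  Finset.univ.inf' Finset.univ_nonempty fun i : Fin (n + 1) => |α i.succ - α i.castSucc|

/-- The maximal jump height `h_max`. -/
def hjumpMax {n : ℕ} (α : Fin (n + 2) → ℝ) : ℝ :=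
  Finset.univ.sup' Finset.univ_nonempty fun i : Fin (n + 1) => |α i.succ - α i.castSucc|

/-- The (real-valued) `L¹`-Potts value `γ·J(u) + ‖u − f‖₁` for piecewise constant `u`. -/
def PottsVal (γ : ℝ) (f u : ℝ → ℝ) : ℝ := γ * (jumps u : ℝ) + L1dist u f

/-- The unit step at `p`. -/
def unitStep (p t : ℝ) : ℝ := if p < t then 1 else 0

/-- `F` passes from `0` to `1` within distance `κ` of `p`, crossing the level `1/2` exactly
at `p`. -/
structure IsTransition (F : ℝ → ℝ) (p κ : ℝ) : Prop where
  measurable : Measurable F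
  nonneg : ∀ t, 0 ≤ F t
  le_one : ∀ t, F t ≤ 1
  eq_zero : ∀ t, t ≤ p - κ → F t = 0
  eq_one : ∀ t, p + κ ≤ t → F t = 1
  lt_half : ∀ t, t < p → F t < 1 / 2
  half_lt : ∀ t, p < t → 1 / 2 < F t

/-- The excess of the local `L¹` error of `v` over that of the unit step. -/
def stepExcess (F : ℝ → ℝ) (p : ℝ) (v : ℝ → ℝ) (t : ℝ) : ℝ :=
  |v t - F t| - |unitStep p t - F t|

lemma integrableOn_indicator_Ioo (S : Set ℝ) (c x y : ℝ) :
    IntegrableOn ((Ioo x y).indicator fun _ => c) S := by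
  refine Integrable.integrableOn ?_
  rw [integrable_indicator_iff measurableSet_Ioo]
  exact integrableOn_const (by simp)

lemma setIntegral_indicator_Ioo {c x y z w : ℝ} (hz : z ≤ x) (hxy : x ≤ y) (hw : y ≤ w) :
    ∫ t in Ioo z w, (Ioo x y).indicator (fun _ => c) t = c * (y - x) := by
  rw [setIntegral_indicator measurableSet_Ioo,
    inter_eq_self_of_subset_right (Ioo_subset_Ioo hz hw)]
  simp [hxy, mul_comm]

namespace IsTransition

variable {F v : ℝ → ℝ} {p κ L : ℝ}

lemma abs_unitStep_sub_le (hF : IsTransition F p κ) {t : ℝ} (ht : t ≠ p) :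
    |unitStep p t - F t| ≤ 1 / 2 := by
  have h0 := hF.nonneg t
  have h1 := hF.le_one t
  unfold unitStep
  rcases lt_or_gt_of_ne ht with h | h
  · have := hF.lt_half t h
    rw [if_neg h.not_gt, abs_le]; constructor <;> linarith
  · have := hF.half_lt t h
    rw [if_pos h, abs_le]; constructor <;> linarith

lemma abs_unitStep_sub_lt (hF : IsTransition F p κ) {s t : ℝ} (ht : t ≠ p)
    (hst : unitStep s t ≠ unitStep p t) :
    |unitStep p t - F t| < |unitStep s t - F t| := by
  have h0 := hF.nonneg t
  have h1 := hF.le_one t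
  rcases lt_or_gt_of_ne ht with h | h
  · have h2 := hF.lt_half t h
    have hp : unitStep p t = 0 := if_neg h.not_gt
    have hs : unitStep s t = 1 := by
      rw [hp] at hst; unfold unitStep at hst ⊢; split_ifs at hst ⊢ <;> simp_all
    rw [hp, hs, abs_of_nonpos (by linarith), abs_of_nonneg (by linarith)]; linarith
  · have h2 := hF.half_lt t h
    have hp : unitStep p t = 1 := if_pos h
    have hs : unitStep s t = 0 := by
      rw [hp] at hst; unfold unitStep at hst ⊢; split_ifs at hst ⊢ <;> simp_all
    rw [hp, hs, abs_of_nonneg (by linarith), abs_of_nonpos (by linarith)]; linarith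

lemma unitStep_eq (hF : IsTransition F p κ) (hκ : 0 < κ) {t : ℝ} (ht : t ∉ Ioo (p - κ) (p + κ)) :
    unitStep p t = F t := by
  unfold unitStep
  rcases le_or_gt t (p - κ) with h | h
  · rw [if_neg (by linarith), hF.eq_zero t h]
  · have : p + κ ≤ t := by by_contra! h2; exact ht ⟨h, h2⟩
    rw [if_pos (by linarith), hF.eq_one t this]

lemma abs_unitStep_sub_le_indicator (hF : IsTransition F p κ) (hκ : 0 < κ) {t : ℝ} (ht : t ≠ p) :
    |unitStep p t - F t| ≤ (Ioo (p - κ) (p + κ)).indicator (fun _ => (1 / 2 : ℝ)) t := by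
  by_cases h : t ∈ Ioo (p - κ) (p + κ)
  · rw [indicator_of_mem h]; exact hF.abs_unitStep_sub_le ht
  · rw [indicator_of_notMem h, hF.unitStep_eq hκ h]; simp

/-- No competitor beats the unit step by more than `κ`. -/
lemma neg_le_integral_stepExcess (hF : IsTransition F p κ) (hκ : 0 < κ) (hL : κ ≤ L)
    (hv : IntegrableOn (stepExcess F p v) (Ioo (p - L) (p + L))) :
    -κ ≤ ∫ t in Ioo (p - L) (p + L), stepExcess F p v t := by
  have hB := setIntegral_indicator_Ioo (c := -(1 / 2 : ℝ)) (x := p - κ) (y := p + κ)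
    (z := p - L) (w := p + L) (by linarith) (by linarith) (by linarith)
  calc -κ = -(1 / 2) * (p + κ - (p - κ)) := by ring
    _ ≤ _ := by
      rw [← hB]
      refine setIntegral_mono_ae (integrableOn_indicator_Ioo _ _ _ _) hv ?_
      filter_upwards [Measure.ae_ne volume p] with t ht
      have h := hF.abs_unitStep_sub_le_indicator hκ ht
      have h2 := abs_nonneg (v t - F t)
      unfold stepExcess
      simp only [indicator] at h ⊢
      split_ifs at h ⊢ <;> linarith

/-- A competitor that is constant around `p` has a large excess. -/
lemma le_integral_stepExcess_of_const (hF : IsTransition F p κ) (hκ : 0 < κ) {r a : ℝ}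
    (hr : κ ≤ r) (hL : r ≤ L)
    (hv : IntegrableOn (stepExcess F p v) (Ioo (p - L) (p + L)))
    (ha : ∀ᵐ t, t ∈ Ioo (p - r) (p + r) → v t = a) :
    r - 2 * κ ≤ ∫ t in Ioo (p - L) (p + L), stepExcess F p v t := by
  have h1 := setIntegral_indicator_Ioo (c := |a|) (x := p - r) (y := p - κ)
    (z := p - L) (w := p + L) (by linarith) (by linarith) (by linarith)
  have h2 := setIntegral_indicator_Ioo (c := |a - 1|) (x := p + κ) (y := p + r)
    (z := p - L) (w := p + L) (by linarith) (by linarith) (by linarith)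
  have h3 := setIntegral_indicator_Ioo (c := (1 / 2 : ℝ)) (x := p - κ) (y := p + κ)
    (z := p - L) (w := p + L) (by linarith) (by linarith) (by linarith)
  have i1 := integrableOn_indicator_Ioo (Ioo (p - L) (p + L)) |a| (p - r) (p - κ)
  have i2 := integrableOn_indicator_Ioo (Ioo (p - L) (p + L)) |a - 1| (p + κ) (p + r)
  have i3 := integrableOn_indicator_Ioo (Ioo (p - L) (p + L)) (1 / 2) (p - κ) (p + κ)
  have ha1 : 1 ≤ |a| + |a - 1| := by
    have := abs_sub_abs_le_abs_sub 1 (1 - a)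
    have h4 := abs_sub_comm 1 a
    simp at this; linarith
  have key := setIntegral_mono_ae ((i1.add i2).sub i3) hv (by
    filter_upwards [Measure.ae_ne volume p, ha] with t ht hat
    have h := hF.abs_unitStep_sub_le_indicator hκ ht
    simp only [stepExcess, Pi.sub_apply, Pi.add_apply]
    suffices (Ioo (p - r) (p - κ)).indicator (fun _ => |a|) t +
        (Ioo (p + κ) (p + r)).indicator (fun _ => |a - 1|) t ≤ |v t - F t| by linarith
    by_cases m1 : t ∈ Ioo (p - r) (p - κ)
    · rw [indicator_of_mem m1, indicator_of_notMem (by rintro ⟨q, -⟩; linarith [m1.2]),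
        hat ⟨m1.1, by linarith [m1.2]⟩, hF.eq_zero t m1.2.le]; simp
    by_cases m2 : t ∈ Ioo (p + κ) (p + r)
    · rw [indicator_of_mem m2, indicator_of_notMem m1,
        hat ⟨by linarith [m2.1], m2.2⟩, hF.eq_one t m2.1.le]; simp
    · rw [indicator_of_notMem m2, indicator_of_notMem m1]; simp)
  simp only [Pi.sub_apply, Pi.add_apply] at key
  rw [integral_sub (by exact i1.add i2) i3, integral_add i1 i2, h1, h2, h3] at key
  nlinarith [mul_le_mul_of_nonneg_right ha1 (sub_nonneg.2 hr)]

/-- A competitor with a single jump not too far from `p` does not beat the unit step, and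
equals it almost everywhere in case of a tie. -/
lemma integral_stepExcess_of_one_jump (hF : IsTransition F p κ) (hκ : 0 < κ) (hL : 9 * κ ≤ L)
    {s a b : ℝ} (hs : s ∈ Ioo (p - L) (p + L))
    (hv : IntegrableOn (stepExcess F p v) (Ioo (p - L) (p + L)))
    (ha : ∀ᵐ t, t ∈ Ioo (p - L) s → v t = a) (hb : ∀ᵐ t, t ∈ Ioo s (p + L) → v t = b) :
    0 ≤ ∫ t in Ioo (p - L) (p + L), stepExcess F p v t ∧
    (∫ t in Ioo (p - L) (p + L), stepExcess F p v t ≤ 0 →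
      ∀ᵐ t, t ∈ Ioo (p - L) (p + L) → v t = unitStep p t) := by
  rcases le_or_gt (L - 2 * κ) |s - p| with hfar | hnear
  · have : L - 2 * κ - 2 * κ ≤ ∫ t in Ioo (p - L) (p + L), stepExcess F p v t := by
      rcases le_abs'.1 hfar with h | h
      · refine hF.le_integral_stepExcess_of_const hκ (a := b) (by linarith) (by linarith) hv ?_
        filter_upwards [hb] with t ht hm
        exact ht ⟨by linarith [hm.1], by linarith [hm.2]⟩
      · refine hF.le_integral_stepExcess_of_const hκ (a := a) (by linarith) (by linarith) hv ?_
        filter_upwards [ha] with t ht hm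
        exact ht ⟨by linarith [hm.1], by linarith [hm.2]⟩
    exact ⟨by linarith, fun h => by linarith⟩
  obtain ⟨hs1, hs2⟩ := hs
  obtain ⟨hn1, hn2⟩ := abs_lt.1 hnear
  have h1 := setIntegral_indicator_Ioo (c := 2 * |a|) (x := p - L) (y := min s (p - κ))
    (z := p - L) (w := p + L) le_rfl (le_min hs1.le (by linarith)) (min_le_of_left_le hs2.le)
  have h2 := setIntegral_indicator_Ioo (c := |a|) (x := p - L) (y := s)
    (z := p - L) (w := p + L) le_rfl hs1.le hs2.le
  have h3 := setIntegral_indicator_Ioo (c := 2 * |b - 1|) (x := max s (p + κ)) (y := p + L)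
    (z := p - L) (w := p + L) (le_max_of_le_left hs1.le) (max_le hs2.le (by linarith)) le_rfl
  have h4 := setIntegral_indicator_Ioo (c := |b - 1|) (x := s) (y := p + L)
    (z := p - L) (w := p + L) hs1.le hs2.le le_rfl
  have i1 := integrableOn_indicator_Ioo (Ioo (p - L) (p + L)) (2 * |a|) (p - L) (min s (p - κ))
  have i2 := integrableOn_indicator_Ioo (Ioo (p - L) (p + L)) (|a|) (p - L) s
  have i3 := integrableOn_indicator_Ioo (Ioo (p - L) (p + L)) (2 * |b - 1|)
    (max s (p + κ)) (p + L)
  have i4 := integrableOn_indicator_Ioo (Ioo (p - L) (p + L)) (|b - 1|) s (p + L)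
  have key := setIntegral_mono_on_ae ((i1.sub i2).add (i3.sub i4)) hv measurableSet_Ioo (by
    filter_upwards [Measure.ae_ne volume p, Measure.ae_ne volume s, ha, hb] with t htp hts hat hbt
      ⟨hm1, hm2⟩
    have hle : |unitStep p t - F t| ≤ |unitStep s t - F t| := by
      by_cases h : unitStep s t = unitStep p t
      · rw [h]
      · exact (hF.abs_unitStep_sub_lt htp h).le
    simp only [stepExcess, Pi.sub_apply, Pi.add_apply]
    rcases lt_or_gt_of_ne hts with h | h
    · have hs0 : unitStep s t = 0 := if_neg h.not_gt
      rw [indicator_of_mem (show t ∈ Ioo (p - L) s from ⟨hm1, h⟩),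
        indicator_of_notMem (show t ∉ Ioo s (p + L) from fun q => by linarith [q.1]),
        indicator_of_notMem (show t ∉ Ioo (max s (p + κ)) (p + L) from
          fun q => by linarith [q.1, le_max_left s (p + κ)]), hat ⟨hm1, h⟩]
      rw [hs0] at hle
      by_cases hq : t < p - κ
      · rw [indicator_of_mem (show t ∈ Ioo (p - L) (min s (p - κ)) from ⟨hm1, lt_min h hq⟩)]
        rw [hF.eq_zero t hq.le] at hle ⊢
        simp at hle ⊢
        rw [hle]; simp; linarith
      · rw [indicator_of_notMem (show t ∉ Ioo (p - L) (min s (p - κ)) from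
          fun q => hq (q.2.trans_le (min_le_right _ _)))]
        have := abs_sub_abs_le_abs_sub (F t) a
        rw [abs_sub_comm (F t) a] at this
        rw [zero_sub, abs_neg] at hle
        linarith
    · have hs0 : unitStep s t = 1 := if_pos h
      rw [indicator_of_mem (show t ∈ Ioo s (p + L) from ⟨h, hm2⟩),
        indicator_of_notMem (show t ∉ Ioo (p - L) s from fun q => by linarith [q.2]),
        indicator_of_notMem (show t ∉ Ioo (p - L) (min s (p - κ)) from
          fun q => by linarith [q.2, min_le_left s (p - κ)]), hbt ⟨h, hm2⟩]
      rw [hs0] at hle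
      by_cases hq : p + κ < t
      · rw [indicator_of_mem (show t ∈ Ioo (max s (p + κ)) (p + L) from ⟨max_lt h hq, hm2⟩)]
        rw [hF.eq_one t hq.le] at hle ⊢
        simp at hle ⊢
        rw [hle]; simp; linarith
      · rw [indicator_of_notMem (show t ∉ Ioo (max s (p + κ)) (p + L) from
          fun q => hq ((le_max_right _ _).trans_lt q.1))]
        have := abs_sub_abs_le_abs_sub (1 - F t) (1 - b)
        rw [show 1 - F t - (1 - b) = b - F t by ring, abs_sub_comm 1 b] at this
        linarith)
  simp only [Pi.sub_apply, Pi.add_apply] at key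
  rw [integral_add (by exact i1.sub i2) (by exact i3.sub i4), integral_sub i1 i2,
    integral_sub i3 i4, h1, h2, h3, h4] at key
  have d1 : 0 < 2 * (min s (p - κ) - (p - L)) - (s - (p - L)) := by
    rcases min_cases s (p - κ) with h | h <;> rw [h.1] <;> linarith
  have d2 : 0 < 2 * (p + L - max s (p + κ)) - (p + L - s) := by
    rcases max_cases s (p + κ) with h | h <;> rw [h.1] <;> linarith
  have e1 := mul_nonneg (abs_nonneg a) d1.le
  have e2 := mul_nonneg (abs_nonneg (b - 1)) d2.le
  refine ⟨by linarith, fun hle => ?_⟩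
  have ha0 : a = 0 := by
    by_contra h
    have := mul_pos (abs_pos.2 h) d1
    linarith
  have hb1 : b = 1 := by
    by_contra h
    have := mul_pos (abs_pos.2 (sub_ne_zero.2 h)) d2
    linarith
  have hvs : ∀ᵐ t, t ∈ Ioo (p - L) (p + L) → v t = unitStep s t := by
    filter_upwards [Measure.ae_ne volume s, ha, hb] with t hts hat hbt hm
    rcases lt_or_gt_of_ne hts with h | h
    · rw [hat ⟨hm.1, h⟩, ha0]; exact (if_neg h.not_gt).symm
    · rw [hbt ⟨h, hm.2⟩, hb1]; exact (if_pos h).symm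
  have hnn : 0 ≤ᵐ[volume.restrict (Ioo (p - L) (p + L))] stepExcess F p v := by
    refine (ae_restrict_iff' measurableSet_Ioo).2 ?_
    filter_upwards [Measure.ae_ne volume p, hvs] with t htp hvt hm
    simp only [stepExcess, hvt hm, Pi.zero_apply, sub_nonneg]
    by_cases h : unitStep s t = unitStep p t
    · rw [h]
    · exact (hF.abs_unitStep_sub_lt htp h).le
  have hz := (setIntegral_eq_zero_iff_of_nonneg_ae hnn hv).1
    (le_antisymm hle (integral_nonneg_of_ae hnn))
  filter_upwards [Measure.ae_ne volume p, hvs, (ae_restrict_iff' measurableSet_Ioo).1 hz]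
    with t htp hvt hzt hm
  by_contra h
  have := hzt hm
  rw [hvt hm] at h
  have h2 := hF.abs_unitStep_sub_lt htp h
  simp only [stepExcess, hvt hm, Pi.zero_apply] at this
  linarith

end IsTransition

/-- The distribution function of the kernel `K`. -/
def kernelCDF (K : ℝ → ℝ) (r : ℝ) : ℝ := ∫ s in Iio r, K s

section kernel

variable {K : ℝ → ℝ} {κ : ℝ}

lemma kernelCDF_mono (hKint : Integrable K) (hKpos : ∀ x, 0 ≤ K x) : Monotone (kernelCDF K) :=
  fun _ _ h => setIntegral_mono_set hKint.integrableOn (ae_of_all _ hKpos)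
    (Iio_subset_Iio h).eventuallyLE

lemma kernelCDF_strict (hKint : Integrable K) (hKpos : ∀ x, 0 ≤ K x) {x y c d : ℝ}
    (hxc : x ≤ c) (hcd : c < d) (hdy : d ≤ y) (hK : ∀ s ∈ Ioo c d, 0 < K s) :
    kernelCDF K x < kernelCDF K y := by
  have hxy : x ≤ y := by linarith
  have hsplit : kernelCDF K y = kernelCDF K x + ∫ s in Ico x y, K s := by
    unfold kernelCDF
    rw [← setIntegral_union (s := Iio x) (t := Ico x y)
      (Set.disjoint_left.2 fun s (h1 : s < x) (h2 : s ∈ Ico x y) => not_lt.2 h2.1 h1)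
      measurableSet_Ico hKint.integrableOn hKint.integrableOn, Iio_union_Ico_eq_Iio hxy]
  have hpos : 0 < ∫ s in Ico x y, K s := by
    rw [setIntegral_pos_iff_support_of_nonneg_ae (ae_of_all _ hKpos) hKint.integrableOn]
    refine lt_of_lt_of_le ?_ (measure_mono (show Ioo c d ⊆ _ from fun s hs =>
      ⟨(hK s hs).ne', by linarith [hs.1], by linarith [hs.2]⟩))
    simpa using hcd
  linarith

lemma kernelCDF_zero (hKint : Integrable K) (hKsym : ∀ x, K (-x) = K x)
    (hKnorm : (∫ x, K x) = 1) : kernelCDF K 0 = 1 / 2 := by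
  have h1 : ∫ s in Iic 0, K s = ∫ s in Ioi 0, K s := by
    have := integral_comp_neg_Iic (0 : ℝ) K
    simpa [hKsym] using this
  have h2 := integral_add_compl (measurableSet_Iic (a := (0 : ℝ))) hKint
  rw [compl_Iic, ← h1, hKnorm, integral_Iic_eq_integral_Iio] at h2
  unfold kernelCDF
  linarith

/-- The translated distribution function of an admissible kernel is a transition. -/
lemma isTransition_kernelCDF (hKint : Integrable K) (hKpos : ∀ x, 0 ≤ K x)
    (hKsym : ∀ x, K (-x) = K x) (hKnorm : (∫ x, K x) = 1)
    (hKsupp : Function.support K ⊆ Set.Icc (-κ) κ)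
    (hKpos0 : ∃ ε > 0, ∀ x : ℝ, |x| < ε → 0 < K x) (p : ℝ) :
    IsTransition (fun t => kernelCDF K (t - p)) p κ := by
  have hle : ∀ r, kernelCDF K r ≤ 1 := fun r => by
    rw [← hKnorm]; exact setIntegral_le_integral hKint (ae_of_all _ hKpos)
  obtain ⟨ε, hε, hK⟩ := hKpos0
  have h0 := kernelCDF_zero hKint hKsym hKnorm
  refine ⟨(kernelCDF_mono hKint hKpos).measurable.comp (measurable_id.sub_const p),
    fun t => integral_nonneg hKpos, fun t => hle _, fun t ht => ?_, fun t ht => ?_,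
    fun t ht => ?_, fun t ht => ?_⟩
  · refine setIntegral_eq_zero_of_forall_eq_zero fun s hs => ?_
    by_contra h
    have := (hKsupp h).1
    simp only [mem_Iio] at hs
    linarith
  · have h2 := integral_add_compl (measurableSet_Iio (a := t - p)) hKint
    have h3 : ∫ s in (Iio (t - p))ᶜ, K s = 0 := by
      rw [compl_Iio, integral_Ici_eq_integral_Ioi]
      refine setIntegral_eq_zero_of_forall_eq_zero fun s hs => ?_
      by_contra h
      have := (hKsupp h).2
      simp only [mem_Ioi] at hs
      linarith
    rw [h3, hKnorm, add_zero] at h2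
    exact h2
  · rw [← h0]
    refine kernelCDF_strict hKint hKpos (c := max (t - p) (-ε)) (d := 0) (le_max_left _ _)
      (max_lt (by linarith) (by linarith)) le_rfl fun s hs => hK s ?_
    rw [abs_of_neg hs.2]
    linarith [hs.1, le_max_right (t - p) (-ε)]
  · rw [← h0]
    refine kernelCDF_strict hKint hKpos (c := 0) (d := min (t - p) ε) le_rfl
      (lt_min (by linarith) (by linarith)) (min_le_left _ _) fun s hs => hK s ?_
    rw [abs_of_pos hs.1]
    exact hs.2.trans_le (min_le_right _ _)

end kernel

section stepOn

variable {n : ℕ} {j : Fin (n + 1) → ℝ} {α : Fin (n + 2) → ℝ}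

lemma lt_iff_lt_card_filter (hj : StrictMono j) (t : ℝ) (k : Fin (n + 1)) :
    j k < t ↔ (k : ℕ) < (Finset.univ.filter fun i => j i < t).card := by
  constructor
  · intro h
    have hsub : Finset.Iic k ⊆ Finset.univ.filter fun i => j i < t := fun i hi => by
      simp only [Finset.mem_filter, Finset.mem_univ, true_and]
      exact (hj.monotone (Finset.mem_Iic.1 hi)).trans_lt h
    have := Finset.card_le_card hsub
    rw [Fin.card_Iic] at this
    omega
  · intro h
    by_contra! hk
    have hsub : (Finset.univ.filter fun i => j i < t) ⊆ Finset.Iio k := fun i hi => by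
      simp only [Finset.mem_filter, Finset.mem_univ, true_and] at hi
      exact Finset.mem_Iio.2 (hj.lt_iff_lt.1 (hi.trans_le hk))
    have := Finset.card_le_card hsub
    rw [Fin.card_Iio] at this
    omega

lemma sum_ite_lt_sub (α : Fin (n + 2) → ℝ) (m : Fin (n + 2)) :
    α 0 + ∑ k : Fin (n + 1), (if (k : ℕ) < m then α k.succ - α k.castSucc else 0) = α m := by
  induction m using Fin.induction with
  | zero => simp
  | succ i ih =>
    have h : ∀ k : Fin (n + 1),
        (if (k : ℕ) < (i.succ : Fin (n + 2)) then α k.succ - α k.castSucc else 0) =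
        (if (k : ℕ) < (i.castSucc : Fin (n + 2)) then α k.succ - α k.castSucc else 0) +
          if k = i then α i.succ - α i.castSucc else 0 := by
      intro k
      rcases lt_trichotomy k i with h | rfl | h
      · have h' : (k : ℕ) < i := h
        simp [h', h.ne, Nat.lt_succ_of_lt h']
      · simp
      · have h' : (i : ℕ) < k := h
        simp [h.ne', Nat.not_lt.2 h'.le, Nat.not_lt.2 (Nat.succ_le_of_lt h')]
    simp only [h, Finset.sum_add_distrib, Finset.sum_ite_eq', Finset.mem_univ, if_true]
    linarith

lemma stepOn_eq_sum (hj : StrictMono j) (t : ℝ) :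
    stepOn j α t =
      α 0 + ∑ k : Fin (n + 1), (α k.succ - α k.castSucc) * unitStep (j k) t := by
  unfold stepOn
  rw [← sum_ite_lt_sub α]
  congr 1
  refine Finset.sum_congr rfl fun k _ => ?_
  have := lt_iff_lt_card_filter hj t k
  unfold unitStep
  by_cases h : j k < t
  · rw [if_pos h, if_pos, mul_one]
    convert this.1 h
  · rw [if_neg h, if_neg, mul_zero]
    intro h2
    apply h
    apply this.2
    convert h2

lemma convK_stepOn_eq_sum (hj : StrictMono j) {K : ℝ → ℝ} (hKint : Integrable K)
    (hKnorm : (∫ x, K x) = 1) (t : ℝ) :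
    convK K (stepOn j α) t =
      α 0 + ∑ k : Fin (n + 1), (α k.succ - α k.castSucc) * kernelCDF K (t - j k) := by
  have h : ∀ s, K s * stepOn j α (t - s) = α 0 * K s + ∑ k : Fin (n + 1),
      (α k.succ - α k.castSucc) * (Iio (t - j k)).indicator K s := by
    intro s
    rw [stepOn_eq_sum hj, mul_add, Finset.mul_sum, mul_comm]
    congr 1
    refine Finset.sum_congr rfl fun k _ => ?_
    unfold unitStep
    by_cases hs : s < t - j k
    · rw [if_pos (by linarith), indicator_of_mem (by exact hs)]; ring
    · rw [if_neg (by intro; apply hs; linarith), indicator_of_notMem (by exact hs)]; ring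
  unfold convK
  simp only [h]
  have hi : ∀ k : Fin (n + 1), Integrable fun s =>
      (α k.succ - α k.castSucc) * (Iio (t - j k)).indicator K s :=
    fun k => (hKint.indicator measurableSet_Iio).const_mul _
  rw [integral_add (hKint.const_mul _) (integrable_finsetSum _ fun k _ => hi k),
    integral_finsetSum _ fun k _ => hi k]
  simp only [integral_const_mul, hKnorm, mul_one, integral_indicator measurableSet_Iio]
  rfl

end stepOn

lemma stepF_eq {m : ℕ} {x : Fin (m + 1) → ℝ} {a : Fin m → ℝ} (hx : StrictMono x) (l : Fin m)
    {t : ℝ} (ht : t ∈ Ioo (x l.castSucc) (x l.succ)) : stepF x a t = a l := by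
  unfold stepF
  rw [Finset.sum_eq_single l, indicator_of_mem ht]
  · intro i _ hi
    refine indicator_of_notMem (fun hm => ?_) _
    rcases lt_or_gt_of_ne hi with h | h
    · have := hx.monotone (show i.succ ≤ l.castSucc from by
        rw [Fin.le_def]; simpa using h)
      linarith [ht.1, hm.2]
    · have := hx.monotone (show l.succ ≤ i.castSucc from by
        rw [Fin.le_def]; simpa using h)
      linarith [ht.2, hm.1]
  · simp

/-- A piecewise constant function is constant on an interval without partition points. -/
lemma IsPCRep.const_of_forall_notMem {u : ℝ → ℝ} {m : ℕ} {x : Fin (m + 1) → ℝ} {a : Fin m → ℝ}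
    (h : IsPCRep u x a) {c d : ℝ} (hc : 0 ≤ c) (hcd : c < d) (hd : d ≤ 1)
    (hx : ∀ i, x i ∉ Ioo c d) : ∃ b, ∀ᵐ t, t ∈ Ioo c d → u t = b := by
  obtain ⟨hmono, h0, h1, hu⟩ := h
  have key : ∃ l : Fin m, x l.castSucc ≤ c ∧ d ≤ x l.succ := by
    by_contra! hno
    have : ∀ i, x i ≤ c := by
      intro i
      induction i using Fin.induction with
      | zero => rw [h0]; exact hc
      | succ i ih =>
        by_contra! hlt
        exact hx _ ⟨hlt, hno i ih⟩
    have := this (Fin.last m)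
    linarith
  obtain ⟨l, hl1, hl2⟩ := key
  refine ⟨a l, ?_⟩
  have hu' := (ae_restrict_iff' measurableSet_Icc).1 hu
  filter_upwards [hu'] with t ht hm
  rw [ht ⟨by linarith [hm.1], by linarith [hm.2]⟩]
  exact stepF_eq hmono l ⟨by linarith [hm.1], by linarith [hm.2]⟩

lemma IsPC.exists_rep_jumps {u : ℝ → ℝ} (hu : IsPC u) :
    ∃ (x : Fin (jumps u + 2) → ℝ) (a : Fin (jumps u + 1) → ℝ), IsPCRep u x a := by
  have : {jj : ℕ | ∃ (x : Fin (jj + 2) → ℝ) (a : Fin (jj + 1) → ℝ), IsPCRep u x a}.Nonempty := by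
    obtain ⟨m, x, a, h⟩ := hu
    cases m with
    | zero =>
      have h0 := h.2.1
      have h1 := h.2.2.1
      rw [show Fin.last 0 = 0 from rfl, h0] at h1
      norm_num at h1
    | succ m => exact ⟨m, x, a, h⟩
  exact Nat.sInf_mem this

lemma IsPC.integrable {u : ℝ → ℝ} (hu : IsPC u) : Integrable u mu01 := by
  obtain ⟨m, x, a, -, -, -, h⟩ := hu
  have : Integrable (stepF x a) mu01 :=
    integrable_finsetSum _ fun l _ => integrableOn_indicator_Ioo _ _ _ _
  exact this.congr (h.mono fun t ht => ht.symm)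

section stepOn

variable {n : ℕ} {j : Fin (n + 1) → ℝ} {α : Fin (n + 2) → ℝ}

lemma jext_last : jext j (Fin.last (n + 2)) = 1 := by
  rw [← Fin.succ_last, jext, Fin.cons_succ, Fin.snoc_last]

lemma jext_succ_castSucc (k : Fin (n + 1)) : jext j k.castSucc.succ = j k := by
  rw [jext, Fin.cons_succ, Fin.snoc_castSucc]

lemma jext_strictMono (hj : StrictMono j) (hj0 : 0 < j 0) (hj1 : j (Fin.last n) < 1) :
    StrictMono (jext j) := by
  rw [Fin.strictMono_iff_lt_succ]
  intro i
  refine Fin.cases ?_ (fun i => ?_) i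
  · have : (Fin.snoc j (1 : ℝ) : Fin (n + 2) → ℝ) 0 = j 0 := by
      rw [← Fin.castSucc_zero, Fin.snoc_castSucc]
    simp only [jext, Fin.castSucc_zero, Fin.cons_zero, Fin.cons_succ, this]
    exact hj0
  · rw [← Fin.succ_castSucc]
    simp only [jext, Fin.cons_succ]
    refine Fin.lastCases ?_ (fun i => ?_) i
    · rw [Fin.snoc_castSucc, Fin.succ_last, Fin.snoc_last]; exact hj1
    · rw [Fin.snoc_castSucc, Fin.succ_castSucc, Fin.snoc_castSucc]
      exact hj Fin.castSucc_lt_succ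

lemma isPCRep_stepOn (hj : StrictMono j) (hj0 : 0 < j 0) (hj1 : j (Fin.last n) < 1) :
    IsPCRep (stepOn j α) (jext j) α := by
  refine ⟨jext_strictMono hj hj0 hj1, rfl, ?_, ?_⟩
  · exact jext_last
  · refine (ae_restrict_iff' measurableSet_Icc).2 ?_
    have hne : ∀ᵐ t : ℝ, ∀ i, t ≠ jext j i := ae_all_iff.2 fun i => Measure.ae_ne volume _
    filter_upwards [hne] with t ht hm
    unfold stepOn
    symm
    apply stepF_eq (jext_strictMono hj hj0 hj1)
    have hk := lt_iff_lt_card_filter hj t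
    generalize hl : (⟨(Finset.univ.filter fun i => j i < t).card, _⟩ : Fin (n + 2)) = l
    have hlc : (l : ℕ) = (Finset.univ.filter fun i => j i < t).card := by rw [← hl]
    constructor
    · refine lt_of_le_of_ne ?_ (ht _).symm
      induction l using Fin.cases with
      | zero => exact hm.1
      | succ i =>
        rw [← Fin.succ_castSucc]
        simp only [jext, Fin.cons_succ, Fin.snoc_castSucc]
        refine ((hk i).2 ?_).le
        simp only [Fin.val_succ] at hlc
        have := Nat.lt_succ_self (i : ℕ)
        exact this.trans_eq (by rw [Nat.succ_eq_add_one, hlc])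
    · refine lt_of_le_of_ne ?_ (ht _)
      induction l using Fin.lastCases with
      | last =>
        simp only [jext, Fin.cons_succ, Fin.snoc_last]
        exact hm.2
      | cast i =>
        simp only [jext, Fin.cons_succ, Fin.snoc_castSucc]
        refine not_lt.1 fun h => ?_
        have := (hk i).1 h
        simp only [Fin.val_castSucc] at hlc
        exact absurd this (not_lt.2 (by rw [hlc]))

lemma jumps_stepOn_le (hj : StrictMono j) (hj0 : 0 < j 0) (hj1 : j (Fin.last n) < 1) :
    jumps (stepOn j α) ≤ n + 1 :=
  Nat.sInf_le ⟨jext j, α, isPCRep_stepOn hj hj0 hj1⟩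

end stepOn

section stepOn

variable {n : ℕ} {j : Fin (n + 1) → ℝ} {α : Fin (n + 2) → ℝ}

lemma lmin_le_jext_sub (hj : StrictMono j) (hj0 : 0 < j 0) (hj1 : j (Fin.last n) < 1)
    {a b : Fin (n + 3)} (hab : a < b) : lmin j ≤ jext j b - jext j a := by
  obtain ⟨a, rfl⟩ : ∃ a', Fin.castSucc a' = a := Fin.exists_castSucc_eq.2 (Fin.ne_last_of_lt hab)
  have h1 : lmin j ≤ jext j a.succ - jext j a.castSucc :=
    Finset.inf'_le _ (Finset.mem_univ a)
  have h2 := (jext_strictMono hj hj0 hj1).monotone (Fin.castSucc_lt_iff_succ_le.1 hab)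
  linarith

lemma add_sum_mul_of_transition {T : Fin (n + 1) → ℝ} (i : Fin (n + 1))
    (h1 : ∀ k < i, T k = 1) (h0 : ∀ k, i < k → T k = 0) :
    α 0 + ∑ k : Fin (n + 1), (α k.succ - α k.castSucc) * T k =
      α i.castSucc + (α i.succ - α i.castSucc) * T i := by
  rw [← sum_ite_lt_sub α i.castSucc, add_assoc]
  congr 1
  have h : ∀ k : Fin (n + 1), (α k.succ - α k.castSucc) * T k =
      (if (k : ℕ) < (i.castSucc : Fin (n + 2)) then α k.succ - α k.castSucc else 0) +
        if k = i then (α i.succ - α i.castSucc) * T i else 0 := by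
    intro k
    rcases lt_trichotomy k i with h | rfl | h
    · have h' : (k : ℕ) < i := h
      simp [h', h.ne, h1 k h]
    · simp
    · have h' : (i : ℕ) < k := h
      simp [h.ne', Nat.not_lt.2 h'.le, h0 k h]
  rw [Finset.sum_congr rfl fun k _ => h k, Finset.sum_add_distrib, Finset.sum_ite_eq',
    if_pos (Finset.mem_univ i), sum_ite_lt_sub]

end stepOn

/-- Near a single transition of `f`, a piecewise constant `u` pays at least as much as the step
`g`, counting `γ` per partition point, with equality only if `u = g` almost everywhere. -/
lemma IsTransition.local_estimate {F f g u : ℝ → ℝ} {p κ L A h γ : ℝ} (hF : IsTransition F p κ)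
    (hκ : 0 < κ) (hL : 9 * κ ≤ L) (hh : h ≠ 0)
    (hγlo : κ * |h| < γ) (hγhi : γ < |h| * (L - 2 * κ))
    (hp0 : 0 ≤ p - L) (hp1 : p + L ≤ 1)
    (hg : ∀ t ∈ Ioo (p - L) (p + L), g t = A + h * unitStep p t)
    (hf : ∀ t ∈ Ioo (p - L) (p + L), f t = A + h * F t)
    (hDint : IntegrableOn (fun t => |u t - f t| - |g t - f t|) (Ioo (p - L) (p + L)))
    {m : ℕ} {x : Fin (m + 1) → ℝ} {a : Fin m → ℝ} (hu : IsPCRep u x a) :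
    γ ≤ γ * (Finset.univ.filter fun i => x i ∈ Ioo (p - L) (p + L)).card +
        ∫ t in Ioo (p - L) (p + L), (|u t - f t| - |g t - f t|) ∧
      (γ * (Finset.univ.filter fun i => x i ∈ Ioo (p - L) (p + L)).card +
        ∫ t in Ioo (p - L) (p + L), (|u t - f t| - |g t - f t|) ≤ γ →
        ∀ᵐ t, t ∈ Ioo (p - L) (p + L) → u t = g t) := by
  have hh' : 0 < |h| := abs_pos.2 hh
  set v : ℝ → ℝ := fun t => (u t - A) / h with hv
  have hD : ∀ t ∈ Ioo (p - L) (p + L),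
      |u t - f t| - |g t - f t| = |h| * stepExcess F p v t := by
    intro t ht
    rw [hg t ht, hf t ht, stepExcess, mul_sub, ← abs_mul, ← abs_mul, hv]
    congr 2
    · field_simp; ring
    · ring
  have hI : ∫ t in Ioo (p - L) (p + L), (|u t - f t| - |g t - f t|) =
      |h| * ∫ t in Ioo (p - L) (p + L), stepExcess F p v t := by
    rw [← integral_const_mul]
    exact setIntegral_congr_fun measurableSet_Ioo hD
  have hvint : IntegrableOn (stepExcess F p v) (Ioo (p - L) (p + L)) := by
    refine (Integrable.const_mul (c := |h|⁻¹) hDint).congr ?_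
    filter_upwards [ae_restrict_mem measurableSet_Ioo] with t ht
    rw [hD t ht, inv_mul_cancel_left₀ hh'.ne']
  rw [hI]
  set E := ∫ t in Ioo (p - L) (p + L), stepExcess F p v t
  have hγ : 0 < γ := lt_trans (mul_pos hκ hh') hγlo
  rcases Nat.lt_trichotomy (Finset.univ.filter fun i => x i ∈ Ioo (p - L) (p + L)).card 1
    with hc | hc | hc
  · have hc0 : (Finset.univ.filter fun i => x i ∈ Ioo (p - L) (p + L)).card = 0 := by omega
    have hno : ∀ i, x i ∉ Ioo (p - L) (p + L) := by
      simpa [Finset.filter_eq_empty_iff] using hc0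
    obtain ⟨b, hb⟩ := hu.const_of_forall_notMem hp0 (by linarith) hp1 hno
    have := hF.le_integral_stepExcess_of_const hκ (r := L) (a := (b - A) / h) (by linarith) le_rfl
      hvint (by filter_upwards [hb] with t ht hm; rw [hv]; simp only [ht hm])
    rw [hc0]
    have := mul_le_mul_of_nonneg_left this hh'.le
    push_cast
    exact ⟨by linarith, fun h => by linarith⟩
  · rw [hc]
    obtain ⟨i, hi⟩ := Finset.card_eq_one.1 hc
    have hmem : ∀ k, x k ∈ Ioo (p - L) (p + L) ↔ k = i := by
      simpa [Finset.ext_iff] using hi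
    have his := (hmem i).2 rfl
    obtain ⟨b, hb⟩ := hu.const_of_forall_notMem (c := p - L) (d := x i) hp0 his.1
      (his.2.le.trans hp1) fun k hk => by
        have := (hmem k).1 ⟨hk.1, hk.2.trans his.2⟩
        exact absurd hk.2 (by rw [this]; exact lt_irrefl _)
    obtain ⟨b', hb'⟩ := hu.const_of_forall_notMem (c := x i) (d := p + L) (hp0.trans his.1.le)
      his.2 hp1 fun k hk => by
        have := (hmem k).1 ⟨his.1.trans hk.1, hk.2⟩
        exact absurd hk.1 (by rw [this]; exact lt_irrefl _)
    obtain ⟨h1, h2⟩ := hF.integral_stepExcess_of_one_jump hκ hL (a := (b - A) / h)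
      (b := (b' - A) / h) his hvint
      (by filter_upwards [hb] with t ht hm; rw [hv]; simp only [ht hm])
      (by filter_upwards [hb'] with t ht hm; rw [hv]; simp only [ht hm])
    push_cast
    refine ⟨by nlinarith, fun hle => ?_⟩
    have hE0 : E ≤ 0 := by
      by_contra! hpos
      have := mul_pos hh' hpos
      linarith
    filter_upwards [h2 hE0] with t ht hm
    have := ht hm
    rw [hg t hm, ← this, hv]
    field_simp
    ring
  · have h1 := hF.neg_le_integral_stepExcess hκ (by linarith) hvint
    have h2 := mul_le_mul_of_nonneg_left h1 hh'.le
    have h3 : (2 : ℝ) ≤ (Finset.univ.filter fun i => x i ∈ Ioo (p - L) (p + L)).card := by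
      exact_mod_cast hc
    have h4 := mul_le_mul_of_nonneg_left h3 hγ.le
    exact ⟨by linarith, fun h => by linarith⟩

lemma IsPCRep.sum_card_filter_le {u : ℝ → ℝ} {m : ℕ} {x : Fin (m + 2) → ℝ} {a : Fin (m + 1) → ℝ}
    (hu : IsPCRep u x a) {ι : Type*} [Fintype ι] (I : ι → Set ℝ)
    [∀ i, DecidablePred (· ∈ I i)] (hI : ∀ i, I i ⊆ Ioo 0 1)
    (hdisj : Pairwise fun i k => Disjoint (I i) (I k)) :
    ∑ i, (Finset.univ.filter fun l => x l ∈ I i).card ≤ m := by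
  obtain ⟨-, h0, h1, -⟩ := hu
  rw [← Finset.card_biUnion]
  · have hsub : (Finset.univ.biUnion fun i => Finset.univ.filter fun l => x l ∈ I i) ⊆
        ({0, Fin.last (m + 1)} : Finset (Fin (m + 2)))ᶜ := by
      intro l hl
      simp only [Finset.mem_biUnion, Finset.mem_univ, true_and, Finset.mem_filter] at hl
      obtain ⟨i, hi⟩ := hl
      have := hI i hi
      simp only [Finset.mem_compl, Finset.mem_insert, Finset.mem_singleton, not_or]
      constructor <;> rintro rfl
      · rw [h0] at this; exact lt_irrefl _ this.1
      · rw [h1] at this; exact lt_irrefl _ this.2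
    have := Finset.card_le_card hsub
    rw [Finset.card_compl, Fintype.card_fin, Finset.card_pair (Fin.last_pos).ne] at this
    omega
  · intro i _ k _ hik
    refine Finset.disjoint_left.2 fun l hl hl' => ?_
    simp only [Finset.mem_filter, Finset.mem_univ, true_and] at hl hl'
    exact Set.disjoint_left.1 (hdisj hik) hl hl'

lemma setIntegral_eq_sum_add_diff {ι : Type*} [Fintype ι] {μ : Measure ℝ} {D : ℝ → ℝ} {S : Set ℝ}
    (I : ι → Set ℝ) (hIm : ∀ i, MeasurableSet (I i)) (hI : ∀ i, I i ⊆ S)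
    (hdisj : Pairwise fun i k => Disjoint (I i) (I k)) (hD : IntegrableOn D S μ) :
    ∫ t in S, D t ∂μ = (∑ i, ∫ t in I i, D t ∂μ) + ∫ t in S \ ⋃ i, I i, D t ∂μ := by
  rw [← integral_iUnion_fintype hIm hdisj fun i => hD.mono_set (hI i),
    setIntegral_sdiff (MeasurableSet.iUnion hIm) hD (iUnion_subset hI)]
  ring

theorem statement_16
    (n : ℕ) (j : Fin (n + 1) → ℝ) (α : Fin (n + 2) → ℝ)
    (hj : StrictMono j) (hj0 : 0 < j 0) (hj1 : j (Fin.last n) < 1)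
    (hadj : ∀ i : Fin (n + 1), α i.castSucc ≠ α i.succ)
    (K : ℝ → ℝ) (κ : ℝ) (hκ : 0 < κ)
    (hKint : Integrable K) (hKpos : ∀ x, 0 ≤ K x)
    (hKsym : ∀ x, K (-x) = K x) (hKnorm : (∫ x, K x) = 1)
    (hKsupp : Function.support K ⊆ Set.Icc (-κ) κ)
    (hKpos0 : ∃ ε > 0, ∀ x : ℝ, |x| < ε → 0 < K x)
    (hκb : κ ≤ hjumpMin α * lmin j / (2 * (8 * hjumpMax α + hjumpMin α)))
    (γ : ℝ)
    (hγlo : 2 * κ * hjumpMax α ≤ γ)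
    (hγhi : γ ≤ (1 / 2) * hjumpMin α * lmin j - (hjumpMin α + 6 * hjumpMax α) * κ) :
    -- `g = stepOn j α` minimizes the Potts functional with data `f = K * g` …
    (∀ u : ℝ → ℝ, IsPC u →
      PottsVal γ (convK K (stepOn j α)) (stepOn j α) ≤ PottsVal γ (convK K (stepOn j α)) u) ∧
    -- … and it is the unique minimizer (up to equality a.e. on `[0,1]`)
    (∀ u : ℝ → ℝ, IsPC u →
      PottsVal γ (convK K (stepOn j α)) u ≤ PottsVal γ (convK K (stepOn j α)) (stepOn j α) →
      ∀ᵐ t ∂mu01, u t = stepOn j α t) := by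
  have hhk : ∀ k : Fin (n + 1), hjumpMin α ≤ |α k.succ - α k.castSucc| ∧
      |α k.succ - α k.castSucc| ≤ hjumpMax α := fun k =>
    ⟨Finset.inf'_le _ (Finset.mem_univ k),
      Finset.le_sup' (fun i : Fin (n + 1) => |α i.succ - α i.castSucc|) (Finset.mem_univ k)⟩
  have hmin : 0 < hjumpMin α := by
    refine (Finset.lt_inf'_iff _).2 fun k _ => abs_pos.2 (sub_ne_zero.2 (hadj k).symm)
  have hmm : hjumpMin α ≤ hjumpMax α := (hhk 0).1.trans (hhk 0).2
  rw [le_div_iff₀ (by linarith)] at hκb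
  have hl : 18 * κ ≤ lmin j := by nlinarith
  set L := lmin j / 2 with hL
  have hL9 : 9 * κ ≤ L := by linarith
  have hγ0 : 0 < γ := by nlinarith [mul_pos hκ (hmin.trans_le hmm)]
  have hgap : ∀ i k : Fin (n + 1), i < k → 2 * L ≤ j k - j i := fun i k hik => by
    have := lmin_le_jext_sub hj hj0 hj1
      (show i.castSucc.succ < k.castSucc.succ from by simpa using hik)
    rw [jext_succ_castSucc, jext_succ_castSucc] at this
    linarith
  have hleft : ∀ i, 0 ≤ j i - 2 * L := fun i => by
    have := lmin_le_jext_sub hj hj0 hj1 (Fin.succ_pos i.castSucc)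
    rw [jext_succ_castSucc, show jext j 0 = 0 from rfl] at this
    linarith
  have hright : ∀ i, j i + 2 * L ≤ 1 := fun i => by
    have := lmin_le_jext_sub hj hj0 hj1 (show i.castSucc.succ < Fin.last (n + 2) from by
      rw [← Fin.succ_last]; exact Fin.succ_lt_succ_iff.2 (Fin.castSucc_lt_last i))
    rw [jext_succ_castSucc, jext_last] at this
    linarith
  have hF : ∀ p, IsTransition (fun t => kernelCDF K (t - p)) p κ :=
    isTransition_kernelCDF hKint hKpos hKsym hKnorm hKsupp hKpos0
  set g := stepOn j α
  set f := convK K g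
  have hfsum : f = fun t => α 0 + ∑ k : Fin (n + 1),
      (α k.succ - α k.castSucc) * kernelCDF K (t - j k) :=
    funext fun t => convK_stepOn_eq_sum hj hKint hKnorm t
  have hgsum : g = fun t => α 0 + ∑ k : Fin (n + 1),
      (α k.succ - α k.castSucc) * unitStep (j k) t :=
    funext fun t => stepOn_eq_sum hj t
  have hgloc : ∀ i, ∀ t ∈ Ioo (j i - L) (j i + L),
      g t = α i.castSucc + (α i.succ - α i.castSucc) * unitStep (j i) t := by
    intro i t ht
    rw [hgsum]
    refine add_sum_mul_of_transition (T := fun k => unitStep (j k) t) i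
      (fun k hk => if_pos ?_) (fun k hk => if_neg ?_)
    · linarith [hgap k i hk, ht.1]
    · linarith [hgap i k hk, ht.2]
  have hfloc : ∀ i, ∀ t ∈ Ioo (j i - L) (j i + L),
      f t = α i.castSucc + (α i.succ - α i.castSucc) * kernelCDF K (t - j i) := by
    intro i t ht
    rw [hfsum]
    refine add_sum_mul_of_transition (T := fun k => kernelCDF K (t - j k)) i
      (fun k hk => (hF (j k)).eq_one t ?_) (fun k hk => (hF (j k)).eq_zero t ?_)
    · linarith [hgap k i hk, ht.1]
    · linarith [hgap i k hk, ht.2]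
  set I : Fin (n + 1) → Set ℝ := fun i => Ioo (j i - L) (j i + L)
  have hout : ∀ t, t ∉ ⋃ i, I i → f t = g t := by
    intro t ht
    rw [hfsum, hgsum]
    simp only [add_right_inj]
    refine Finset.sum_congr rfl fun k _ => ?_
    rw [(hF (j k)).unitStep_eq hκ fun hm => ht (mem_iUnion.2 ⟨k, ?_⟩)]
    exact ⟨by linarith [hm.1], by linarith [hm.2]⟩
  have hI01 : ∀ i, I i ⊆ Ioo 0 1 := fun i t ht =>
    ⟨by linarith [ht.1, hleft i], by linarith [ht.2, hright i]⟩
  have hdisj : Pairwise fun i k => Disjoint (I i) (I k) := by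
    intro i k hik
    rw [Set.disjoint_left]
    intro t h1 h2
    rcases lt_or_gt_of_ne hik with h | h
    · linarith [hgap i k h, h1.2, h2.1]
    · linarith [hgap k i h, h2.2, h1.1]
  have hfint : Integrable f mu01 := by
    rw [hfsum]
    have hfin : IsFiniteMeasure mu01 := by unfold mu01; infer_instance
    refine (integrable_const _).add (integrable_finsetSum _ fun k _ => Integrable.const_mul ?_ _)
    refine Integrable.of_bound (hF (j k)).measurable.aestronglyMeasurable 1
      (ae_of_all _ fun t => ?_)
    rw [Real.norm_eq_abs, abs_of_nonneg ((hF (j k)).nonneg t)]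
    exact (hF (j k)).le_one t
  have hgint : Integrable g mu01 := IsPC.integrable ⟨_, _, _, isPCRep_stepOn hj hj0 hj1⟩
  have hjumps : γ * (jumps g : ℝ) ≤ γ * ((n + 1 : ℕ) : ℝ) :=
    mul_le_mul_of_nonneg_left (by exact_mod_cast jumps_stepOn_le hj hj0 hj1) hγ0.le
  have main : ∀ u : ℝ → ℝ, IsPC u →
      PottsVal γ f g ≤ PottsVal γ f u ∧
        (PottsVal γ f u ≤ PottsVal γ f g → ∀ᵐ t ∂mu01, u t = g t) := by
    intro u hu
    have hu1 : Integrable (fun t => |u t - f t|) mu01 := (hu.integrable.sub hfint).abs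
    have hg1 : Integrable (fun t => |g t - f t|) mu01 := (hgint.sub hfint).abs
    obtain ⟨x, a, hrep⟩ := hu.exists_rep_jumps
    set D : ℝ → ℝ := fun t => |u t - f t| - |g t - f t| with hD
    have hDint : IntegrableOn D (Icc 0 1) := hu1.sub hg1
    have hIcc : ∀ i, I i ⊆ Icc 0 1 := fun i => (hI01 i).trans Ioo_subset_Icc_self
    have hdiff : L1dist u f - L1dist g f = (∑ i, ∫ t in I i, D t) +
        ∫ t in Icc 0 1 \ ⋃ i, I i, D t := by
      rw [← setIntegral_eq_sum_add_diff I (fun i => measurableSet_Ioo) hIcc hdisj hDint]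
      exact (integral_sub hu1 hg1).symm
    have hOm : MeasurableSet (Icc (0 : ℝ) 1 \ ⋃ i, I i) :=
      measurableSet_Icc.diff (MeasurableSet.iUnion fun i => measurableSet_Ioo)
    have hOD : ∀ t ∈ Icc (0 : ℝ) 1 \ ⋃ i, I i, D t = |u t - g t| := fun t ht => by
      simp [hD, hout t ht.2]
    have hOint : ∫ t in Icc 0 1 \ ⋃ i, I i, D t = ∫ t in Icc 0 1 \ ⋃ i, I i, |u t - g t| :=
      setIntegral_congr_fun hOm hOD
    have hO0 : 0 ≤ ∫ t in Icc 0 1 \ ⋃ i, I i, |u t - g t| := integral_nonneg fun t => abs_nonneg _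
    have hloc := fun i => (hF (j i)).local_estimate (f := f) (g := g) (u := u) (γ := γ) hκ hL9
      (sub_ne_zero.2 (hadj i).symm) (by nlinarith [hhk i, hmin])
      (by
        have h1 := mul_le_mul_of_nonneg_right (hhk i).1 (show 0 ≤ L - 2 * κ by linarith)
        nlinarith [mul_pos hκ hmin, mul_le_mul_of_nonneg_left hmm hκ.le])
      (by linarith [hleft i]) (by linarith [hright i]) (hgloc i) (hfloc i)
      (hDint.mono_set (hIcc i)) hrep
    have hcount :
        γ * ∑ i, ((Finset.univ.filter fun l => x l ∈ Ioo (j i - L) (j i + L)).card : ℝ) ≤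
        γ * (jumps u : ℝ) :=
      mul_le_mul_of_nonneg_left (by exact_mod_cast hrep.sum_card_filter_le I hI01 hdisj) hγ0.le
    rw [Finset.mul_sum] at hcount
    set c : Fin (n + 1) → ℝ := fun i =>
      γ * ((Finset.univ.filter fun l => x l ∈ Ioo (j i - L) (j i + L)).card : ℝ) +
        ∫ t in I i, D t
    have hcγ : ∀ i ∈ Finset.univ, γ ≤ c i := fun i _ => (hloc i).1
    have hcsum : ∑ i, c i =
        ∑ i, γ * ((Finset.univ.filter fun l => x l ∈ Ioo (j i - L) (j i + L)).card : ℝ) +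
        ∑ i, ∫ t in I i, D t := Finset.sum_add_distrib
    have hγsum : ∑ _i : Fin (n + 1), γ = γ * ((n + 1 : ℕ) : ℝ) := by
      simp [mul_comm]
    have hle := Finset.sum_le_sum hcγ
    unfold PottsVal
    refine ⟨by linarith, fun hrev => ?_⟩
    have hceq : ∀ i ∈ Finset.univ, γ = c i :=
      (Finset.sum_eq_sum_iff_of_le hcγ).1 (le_antisymm hle (by linarith))
    have hOz : ∫ t in Icc 0 1 \ ⋃ i, I i, |u t - g t| = 0 := by linarith
    have hOi : IntegrableOn (fun t => |u t - g t|) (Icc 0 1 \ ⋃ i, I i) :=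
      IntegrableOn.mono_set (t := Icc 0 1) (hu.integrable.sub hgint).abs sdiff_subset
    have hOae := (ae_restrict_iff' hOm).1
      ((setIntegral_eq_zero_iff_of_nonneg_ae (ae_of_all _ fun t => abs_nonneg _) hOi).1 hOz)
    have hIae : ∀ᵐ t, ∀ i, t ∈ I i → u t = g t :=
      ae_all_iff.2 fun i => (hloc i).2 (hceq i (Finset.mem_univ i)).ge
    refine (ae_restrict_iff' measurableSet_Icc).2 ?_
    filter_upwards [hOae, hIae] with t h1 h2 ht
    by_cases hm : t ∈ ⋃ i, I i
    · obtain ⟨i, hi⟩ := mem_iUnion.1 hm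
      exact h2 i hi
    · exact sub_eq_zero.1 (abs_eq_zero.1 (h1 ⟨ht, hm⟩))
  exact ⟨fun u hu => (main u hu).1, fun u hu => (main u hu).2⟩
end
end

section
/- Let n ≥ 1 and g_0, g_1, ..., g_n ∈ ℝ. Then for every y ∈ ℝ, Σ_{i=0}^n |g_i − y| ≥ (n/2)·min_{0 ≤ i ≤ n−1} |g_i − g_{i+1}|. -/
/-- For real numbers `g 0, …, g (n+1)` and any `y`,
`Σ_i |g i − y| ≥ ((n+1)/2) · min_i |g i − g (i+1)|`. -/
theorem statement_18 (n : ℕ) (g : Fin (n + 2) → ℝ) (y : ℝ) :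
    ((n + 1 : ℕ) : ℝ) / 2 *
        (Finset.univ.inf' Finset.univ_nonempty
          fun i : Fin (n + 1) => |g i.castSucc - g i.succ|) ≤
      ∑ i : Fin (n + 2), |g i - y| := by
  set m := Finset.univ.inf' Finset.univ_nonempty
    fun i : Fin (n + 1) => |g i.castSucc - g i.succ|
  have hm (i : Fin (n + 1)) : m ≤ |g i.castSucc - y| + |g i.succ - y| :=
    (Finset.inf'_le _ (Finset.mem_univ i)).trans <| by
      rw [abs_sub_comm (g i.succ) y]
      exact abs_sub_le _ _ _
  have hsum := Finset.sum_le_sum fun i (_ : i ∈ Finset.univ) => hm i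
  rw [Finset.sum_add_distrib, Finset.sum_const, Finset.card_univ, Fintype.card_fin,
    nsmul_eq_mul] at hsum
  have hfirst := Fin.sum_univ_succ fun i => |g i - y|
  have hlast := Fin.sum_univ_castSucc fun i => |g i - y|
  linarith [abs_nonneg (g 0 - y), abs_nonneg (g (Fin.last (n + 1)) - y)]
end

section
/- Let K ∈ L¹(ℝ) with K ≥ 0, K(−x) = K(x) for all x, ∫_ℝ K = 1 and supp K ⊆ [−κ,κ], and let a, b ∈ ℝ and j ∈ ℝ. For the step function g = a·1_{(−∞,j)} + b·1_{[j,∞)} the following hold: (i) K*g(j) = (a+b)/2; (ii) K*g is monotone on [j−κ, j+κ] (nondecreasing if a ≤ b, nonincreasing if a ≥ b); (iii) for every interval J ⊆ [j−κ, j+κ], ‖(g − K*g)·1_J‖_{L¹} ≤ (1/2)·|b − a|·|J|, and if in addition K is strictly positive on a neighborhood of 0 and a ≠ b and |J| > 0, this inequality is strict. -/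
open MeasureTheory Set
open scoped Classical

noncomputable section

/-- The convolution of a kernel of mass one with a step function, in terms of the
distribution function of the kernel. -/
theorem convK_step {K : ℝ → ℝ} (hKint : Integrable K) (hKnorm : (∫ x, K x) = 1)
    (a b j t : ℝ) :
    convK K (fun t => if t < j then a else b) t = a + (b - a) * ∫ s in Iic (t - j), K s := by
  have h : ∀ s, K s * (if t - s < j then a else b)
      = a * K s + (b - a) * (Iic (t - j)).indicator K s := by
    intro s
    by_cases hs : s ≤ t - j
    · rw [if_neg (by linarith), indicator_of_mem (mem_Iic.2 hs)]
      ring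
    · rw [if_pos (by linarith [not_le.1 hs]), indicator_of_notMem (by simpa using hs)]
      ring
  simp only [convK, h]
  rw [integral_add (hKint.const_mul a)
    ((hKint.indicator measurableSet_Iic).const_mul (b - a)), integral_const_mul,
    integral_const_mul, hKnorm, integral_indicator measurableSet_Iic, mul_one]

theorem integral_Iic_zero_of_even {K : ℝ → ℝ} (hKint : Integrable K)
    (hKsym : ∀ x, K (-x) = K x) (hKnorm : (∫ x, K x) = 1) :
    ∫ s in Iic (0 : ℝ), K s = 1 / 2 := by
  have h₁ := intervalIntegral.integral_Iic_add_Ioi (b := (0 : ℝ)) hKint.integrableOn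
    hKint.integrableOn
  have h₂ := integral_comp_neg_Iic (0 : ℝ) K
  simp only [hKsym, neg_zero] at h₂
  linarith

theorem monotone_integral_Iic {K : ℝ → ℝ} (hKint : Integrable K) (hKpos : ∀ x, 0 ≤ K x) :
    Monotone fun x : ℝ => ∫ s in Iic x, K s := fun _ _ hxy =>
  setIntegral_mono_set hKint.integrableOn (Filter.Eventually.of_forall hKpos)
    (Iic_subset_Iic.2 hxy).eventuallyLE

theorem integral_Iic_lt_integral_Iic {K : ℝ → ℝ} (hKint : Integrable K)
    {x y : ℝ} (hxy : x < y) (hK : ∀ s ∈ Ioo x y, 0 < K s) :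
    ∫ s in Iic x, K s < ∫ s in Iic y, K s := by
  have h := intervalIntegral.integral_Iic_sub_Iic (a := x) (b := y) hKint.integrableOn
    hKint.integrableOn
  have := intervalIntegral.intervalIntegral_pos_of_pos_on hKint.intervalIntegrable hK hxy
  linarith

/-- A kernel positive near `0` puts positive mass on every one-sided neighbourhood of `0`. -/
theorem integral_Iic_lt_integral_Iic_of_pos_near_zero {K : ℝ → ℝ} (hKint : Integrable K)
    (hKpos : ∀ x, 0 ≤ K x) {ε : ℝ} (hε : 0 < ε) (hK : ∀ x, |x| < ε → 0 < K x)
    {x y : ℝ} (hx : x ≤ 0) (hy : 0 ≤ y) (hxy : x < y) :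
    ∫ s in Iic x, K s < ∫ s in Iic y, K s := by
  have hmono := monotone_integral_Iic hKint hKpos
  have hlt : max x (-ε) < min y ε := by
    simp only [max_lt_iff, lt_min_iff]
    exact ⟨⟨hxy, by linarith⟩, by linarith, by linarith⟩
  calc ∫ s in Iic x, K s ≤ ∫ s in Iic (max x (-ε)), K s := hmono (le_max_left _ _)
    _ < ∫ s in Iic (min y ε), K s := by
      refine integral_Iic_lt_integral_Iic hKint hlt fun s hs => hK s (abs_lt.2 ⟨?_, ?_⟩)
      · exact (le_max_right _ _).trans_lt hs.1
      · exact hs.2.trans_le (min_le_right _ _)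
    _ ≤ ∫ s in Iic y, K s := hmono (min_le_left _ _)

theorem abs_step_sub_convK {K : ℝ → ℝ} (hKint : Integrable K) (hKpos : ∀ x, 0 ≤ K x)
    (hKnorm : (∫ x, K x) = 1) (a b j t : ℝ) :
    |(if t < j then a else b) - convK K (fun t' => if t' < j then a else b) t| =
      |b - a| * if t < j then ∫ s in Iic (t - j), K s else 1 - ∫ s in Iic (t - j), K s := by
  have h0 : 0 ≤ ∫ s in Iic (t - j), K s := integral_nonneg hKpos
  have h1 : ∫ s in Iic (t - j), K s ≤ 1 :=
    hKnorm ▸ setIntegral_le_integral hKint (Filter.Eventually.of_forall hKpos)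
  rw [convK_step hKint hKnorm]
  split_ifs
  · rw [sub_add_cancel_left, abs_neg, abs_mul, abs_of_nonneg h0]
  · rw [← abs_of_nonneg (sub_nonneg.2 h1), ← abs_mul]
    congr 1
    ring

theorem statement_19
    (K : ℝ → ℝ) (κ : ℝ) (hκ : 0 < κ)
    (hKint : Integrable K) (hKpos : ∀ x, 0 ≤ K x)
    (hKsym : ∀ x, K (-x) = K x) (hKnorm : (∫ x, K x) = 1)
    (hKsupp : Function.support K ⊆ Set.Icc (-κ) κ)
    (a b jp : ℝ) :
    -- (i) the convolution takes the mid-value at the jump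
    convK K (fun t => if t < jp then a else b) jp = (a + b) / 2 ∧
    -- (ii) the convolution is monotone on `[jp−κ, jp+κ]`
    (a ≤ b →
      MonotoneOn (convK K (fun t => if t < jp then a else b)) (Set.Icc (jp - κ) (jp + κ))) ∧
    (b ≤ a →
      AntitoneOn (convK K (fun t => if t < jp then a else b)) (Set.Icc (jp - κ) (jp + κ))) ∧
    -- (iii) on every interval `J ⊆ [jp−κ, jp+κ]`,
    -- `‖(g − K*g)·1_J‖₁ ≤ (1/2)·|b−a|·|J|` …
    (∀ c d : ℝ, jp - κ ≤ c → c ≤ d → d ≤ jp + κ →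
      (∫ t in Set.Ioo c d,
          |(if t < jp then a else b) - convK K (fun t' => if t' < jp then a else b) t|) ≤
        (1 / 2) * |b - a| * (d - c)) ∧
    -- … and the inequality is strict if `K` is strictly positive near `0`, `a ≠ b`
    -- and `J` has positive length
    ((∃ ε > 0, ∀ x : ℝ, |x| < ε → 0 < K x) → a ≠ b →
      ∀ c d : ℝ, jp - κ ≤ c → c < d → d ≤ jp + κ →
        (∫ t in Set.Ioo c d,
            |(if t < jp then a else b) - convK K (fun t' => if t' < jp then a else b) t|) <
          (1 / 2) * |b - a| * (d - c)) := by
  have hmono := monotone_integral_Iic hKint hKpos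
  have hzero := integral_Iic_zero_of_even hKint hKsym hKnorm
  have hle : ∀ t, |(if t < jp then a else b) - convK K (fun t' => if t' < jp then a else b) t| ≤
      1 / 2 * |b - a| := by
    intro t
    rw [abs_step_sub_convK hKint hKpos hKnorm, mul_comm]
    gcongr
    split_ifs with ht
    · exact hzero ▸ hmono (by linarith : t - jp ≤ 0)
    · have : ∫ s in Iic (0 : ℝ), K s ≤ ∫ s in Iic (t - jp), K s :=
        hmono (by linarith [not_lt.1 ht])
      linarith
  refine ⟨?_, ?_, ?_, ?_, ?_⟩
  · rw [convK_step hKint hKnorm, sub_self, hzero]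
    ring
  · intro hab x _ y _ hxy
    rw [convK_step hKint hKnorm, convK_step hKint hKnorm]
    have := mul_le_mul_of_nonneg_left (hmono (sub_le_sub_right hxy jp)) (sub_nonneg.2 hab)
    simpa using this
  · intro hba x _ y _ hxy
    rw [convK_step hKint hKnorm, convK_step hKint hKnorm]
    have := mul_le_mul_of_nonpos_left (hmono (sub_le_sub_right hxy jp)) (sub_nonpos.2 hba)
    simpa using this
  · intro c d _ hcd _
    have := norm_setIntegral_le_of_norm_le_const (μ := volume) (s := Ioo c d) (C := 1 / 2 * |b - a|)
      (by simp) fun t _ => (Real.norm_of_nonneg (abs_nonneg _)).trans_le (hle t)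
    rw [Real.volume_real_Ioo_of_le hcd] at this
    exact (le_abs_self _).trans this
  · rintro ⟨ε, hε, hK⟩ hab c d _ hcd _
    have hlt : ∀ t, t ≠ jp →
        |(if t < jp then a else b) - convK K (fun t' => if t' < jp then a else b) t| <
          1 / 2 * |b - a| := by
      intro t ht
      have hpos : 0 < |b - a| := abs_pos.2 (sub_ne_zero.2 hab.symm)
      rw [abs_step_sub_convK hKint hKpos hKnorm, mul_comm]
      gcongr
      split_ifs with htj
      · exact hzero ▸ integral_Iic_lt_integral_Iic_of_pos_near_zero hKint hKpos hε hK
          (by linarith) le_rfl (by linarith : t - jp < 0)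
      · have htj' : 0 < t - jp := sub_pos.2 (lt_of_le_of_ne (not_lt.1 htj) ht.symm)
        linarith [integral_Iic_lt_integral_Iic_of_pos_near_zero hKint hKpos hε hK
          le_rfl htj'.le htj']
    have hmeas : Measurable fun t =>
        |(if t < jp then a else b) - convK K (fun t' => if t' < jp then a else b) t| := by
      simp only [abs_step_sub_convK hKint hKpos hKnorm]
      have hF : Measurable fun t : ℝ => ∫ s in Iic (t - jp), K s :=
        hmono.measurable.comp (measurable_id.sub_const jp)
      exact (Measurable.ite measurableSet_Iio hF (hF.const_sub 1)).const_mul _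
    have hint : IntegrableOn (fun t =>
        |(if t < jp then a else b) - convK K (fun t' => if t' < jp then a else b) t|)
        (Ioo c d) :=
      Measure.integrableOn_of_bounded (M := 1 / 2 * |b - a|) (by simp)
        hmeas.aestronglyMeasurable
        (Filter.Eventually.of_forall fun t => (Real.norm_of_nonneg (abs_nonneg _)).trans_le (hle t))
    have hconst : IntegrableOn (fun _ : ℝ => 1 / 2 * |b - a|) (Ioo c d) :=
      integrableOn_const (by simp)
    have hpos := (setIntegral_pos_iff_support_of_nonneg_ae
      (Filter.Eventually.of_forall fun t => sub_nonneg.2 (hle t)) (hconst.sub hint)).2 <| by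
        refine lt_of_lt_of_le (b := volume (Ioo c d \ {jp})) ?_ (measure_mono ?_)
        · rw [measure_sdiff_null (measure_singleton jp)]
          simpa using hcd
        · exact fun t ht => ⟨(sub_pos.2 (hlt t ht.2)).ne', ht.1⟩
    rw [integral_sub hconst hint, setIntegral_const, Real.volume_real_Ioo_of_le hcd.le,
      smul_eq_mul] at hpos
    linarith
end
end
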